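/- For every integer l ≥ 1, the number of nonzero vectors x = (x_0,…,x_l) ∈ K^{l+1} with x_0^{p+1} + x_1^{p+1} + ⋯ + x_l^{p+1} = 0 equals (p^2 − 1)·(p^{l+1} + 1)·Σ_l if l is even, and (p^2 − 1)·(p^l + 1)·Σ_l if l is odd. Equivalently, the Fermat hypersurface X_0^{p+1} + ⋯ + X_l^{p+1} = 0 in projective l-space has (p^{l+1} + 1)·Σ_l points over K if l is even and (p^l + 1)·Σ_l points over K if l is odd. -/

import Mathlib

/-!
The number `N_n` of all zeros in `K^n` of the Hermitian form `H(x) = ∑ x_i^{p+1}` obeys a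
one-step recursion. The norm `x ↦ x^{p+1}` from `K` to the prime field takes each nonzero value
exactly `p + 1` times (`card_norm_fiber`) and the value `0` once, and `-H(y)` always lies in the
prime field. Solving `x^{p+1} = -H(y)` for the remaining coordinate therefore gives
`N_{n+1} = N_n + (p + 1) (p^{2n} - N_n)`, whence `p N_n = p^{2n} + (-1)^n (p - 1) p^n`
(`card_zeros`). Discarding the zero vector and using `(p^2 - 1) Σ_l = p^{2(⌊(l-1)/2⌋+1)} - 1`
yields both formulas.
-/

/-- `fermatSigma p l` is the sum `Σ_l = Σ_{j=0}^{⌊(l−1)/2⌋} p^{2j}`. -/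
def fermatSigma (p l : ℕ) : ℕ :=
  ∑ j ∈ Finset.range ((l - 1) / 2 + 1), p ^ (2 * j)

open Polynomial in
/-- The norm map `x ↦ x^{p+1}` hits every nonzero `c` of the prime field exactly `p + 1` times:
in the cyclic group `K^×` of order `(p-1)(p+1)`, the equation `c^{p-1} = 1` forces `c` to be a
`(p+1)`-st power, and there are `p + 1` roots of unity of order dividing `p + 1`. -/
lemma card_norm_fiber (p : ℕ) (hp : p.Prime) (K : Type*) [Field K] [Fintype K] [DecidableEq K]
    (hK : Fintype.card K = p ^ 2) (c : K) (hc : c ≠ 0) (hcp : c ^ p = c) :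
    Fintype.card {x : K // x ^ (p + 1) = c} = p + 1 := by
  obtain ⟨q, rfl⟩ : ∃ q, p = q + 1 := ⟨p - 1, (Nat.succ_pred_eq_of_pos hp.pos).symm⟩
  have hq : 0 < q := by have := hp.two_le; omega
  have hcard : Nat.card Kˣ = q * (q + 1 + 1) := by
    rw [Nat.card_eq_fintype_card, Fintype.card_units, hK]
    apply Nat.sub_eq_of_eq_add
    ring
  obtain ⟨g, hg⟩ := IsCyclic.exists_generator (α := Kˣ)
  have hord : orderOf g = q * (q + 1 + 1) := by
    rw [orderOf_eq_card_of_forall_mem_zpowers hg, hcard]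
  have hprim : IsPrimitiveRoot ((g : K) ^ q) (q + 1 + 1) := by
    have h0 : IsPrimitiveRoot (g : K) (q * (q + 1 + 1)) := by
      rw [← hord, ← orderOf_units]
      exact IsPrimitiveRoot.orderOf _
    exact h0.pow (by positivity) rfl
  have hex : ∃ d : K, d ^ (q + 1 + 1) = c := by
    obtain ⟨k, hk⟩ := (mem_powers_iff_mem_zpowers (x := g)).2 (hg (Units.mk0 c hc))
    have hk' : g ^ k = Units.mk0 c hc := hk
    have h1 : (Units.mk0 c hc) ^ q = 1 := by
      ext
      have : c ^ q * c = 1 * c := by rw [← pow_succ, hcp, one_mul]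
      simpa using mul_right_cancel₀ hc this
    rw [← hk', ← pow_mul, ← orderOf_dvd_iff_pow_eq_one, hord, mul_comm k] at h1
    obtain ⟨m, rfl⟩ := Nat.dvd_of_mul_dvd_mul_left hq h1
    refine ⟨(g : K) ^ m, ?_⟩
    have := congrArg Units.val hk'
    rw [← pow_mul, mul_comm]
    simpa using this
  have hroots := hprim.card_nthRoots c
  rw [if_pos hex] at hroots
  refine Eq.trans ?_ hroots
  rw [Fintype.card_subtype,
    ← Multiset.toFinset_card_of_nodup (hprim.nthRoots_nodup hc)]
  congr 1
  ext x
  simp [mem_nthRoots]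

/-- The value `-∑ x_i^{p+1}` lies in the prime field, expressed as Frobenius invariance. -/
lemma hermitian_pow_char (p : ℕ) (hp : p.Prime) (K : Type*) [Field K] [Fintype K]
    (hK : Fintype.card K = p ^ 2) (n : ℕ) (x : Fin n → K) :
    (-∑ i, x i ^ (p + 1)) ^ p = -∑ i, x i ^ (p + 1) := by
  have := Fact.mk hp
  have : CharP K p := charP_of_card_eq_prime_pow (f := 2) (by simpa using hK)
  rw [← frobenius_def, map_neg, map_sum]
  congr 1
  refine Finset.sum_congr rfl fun i _ => ?_
  rw [frobenius_def, ← pow_mul, show (p + 1) * p = p ^ 2 + p by ring, pow_add, ← hK,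
    FiniteField.pow_card, pow_succ, mul_comm]

/-- Each `y` extends to a zero `(x_0, y)` in `1` or `p + 1` ways, according to whether `y` is
itself a zero. -/
lemma card_zeros_succ (p : ℕ) (hp : p.Prime) (K : Type*) [Field K] [Fintype K] [DecidableEq K]
    (hK : Fintype.card K = p ^ 2) (n : ℕ) :
    Fintype.card {x : Fin (n + 1) → K // ∑ i, x i ^ (p + 1) = 0}
      + p * Fintype.card {x : Fin n → K // ∑ i, x i ^ (p + 1) = 0} = (p + 1) * p ^ (2 * n) := by
  let e : {x : Fin (n + 1) → K // ∑ i, x i ^ (p + 1) = 0} ≃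
      Σ y : Fin n → K, {x : K // x ^ (p + 1) = -∑ i, y i ^ (p + 1)} :=
    { toFun := fun x => ⟨Fin.tail x.1, x.1 0, by
        have := x.2
        rw [Fin.sum_univ_succ] at this
        exact eq_neg_of_add_eq_zero_left this⟩
      invFun := fun z => ⟨Fin.cons z.2.1 z.1, by
        rw [Fin.sum_univ_succ]
        simp [z.2.2]⟩
      left_inv := fun x => by simp
      right_inv := fun z => rfl }
  have hfib : ∀ y : Fin n → K,
      Fintype.card {x : K // x ^ (p + 1) = -∑ i, y i ^ (p + 1)}
        + p * (if ∑ i, y i ^ (p + 1) = 0 then 1 else 0) = p + 1 := by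
    intro y
    split_ifs with h
    · have : Fintype.card {x : K // x ^ (p + 1) = -∑ i, y i ^ (p + 1)} = 1 := by
        rw [Fintype.card_eq_one_iff]
        exact ⟨⟨0, by simp [h]⟩, fun z => Subtype.ext (by simpa [h] using z.2)⟩
      omega
    · rw [card_norm_fiber p hp K hK _ (neg_ne_zero.2 h) (hermitian_pow_char p hp K hK n y)]
      simp
  have hsum := Finset.sum_congr (rfl : (Finset.univ : Finset (Fin n → K)) = Finset.univ)
    fun y _ => hfib y
  rw [Finset.sum_add_distrib, ← Finset.mul_sum, ← Fintype.card_sigma, ← Fintype.card_congr e,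
    Finset.sum_boole, Finset.sum_const, Finset.card_univ, Fintype.card_fun, hK,
    Fintype.card_fin, ← pow_mul] at hsum
  rw [Fintype.card_subtype (fun x : Fin n → K => ∑ i, x i ^ (p + 1) = 0)]
  simpa [mul_comm] using hsum

lemma card_zeros (p : ℕ) (hp : p.Prime) (K : Type*) [Field K] [Fintype K] [DecidableEq K]
    (hK : Fintype.card K = p ^ 2) (n : ℕ) :
    (p : ℤ) * Fintype.card {x : Fin n → K // ∑ i, x i ^ (p + 1) = 0}
      = p ^ (2 * n) + (-1) ^ n * (p - 1) * p ^ n := by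
  induction n with
  | zero => simp
  | succ n ih =>
    have h := congrArg (Nat.cast : ℕ → ℤ) (card_zeros_succ p hp K hK n)
    push_cast at h
    rw [eq_sub_of_add_eq h, ih]
    ring

lemma card_nonzero_zeros_add_one (p : ℕ) (K : Type*) [Field K] [Fintype K] [DecidableEq K]
    (n : ℕ) :
    Nat.card {x : Fin n → K // x ≠ 0 ∧ ∑ i, x i ^ (p + 1) = 0} + 1
      = Fintype.card {x : Fin n → K // ∑ i, x i ^ (p + 1) = 0} := by
  rw [Nat.card_eq_fintype_card, Fintype.card_subtype, Fintype.card_subtype]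
  have h0 : (0 : Fin n → K) ∈
      Finset.univ.filter (fun x : Fin n → K => ∑ i, x i ^ (p + 1) = 0) := by simp
  rw [← Finset.card_erase_add_one h0]
  congr 2
  ext x
  simp

lemma fermatSigma_mul (p l : ℕ) :
    ((p : ℤ) ^ 2 - 1) * fermatSigma p l = p ^ (2 * ((l - 1) / 2 + 1)) - 1 := by
  have h := mul_geom_sum ((p : ℤ) ^ 2) ((l - 1) / 2 + 1)
  simpa [fermatSigma, ← pow_mul] using h

/-- Let `p > 2` be a prime and `K` a field with `p^2` elements.  For every `l ≥ 1`, the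
number of nonzero vectors `x = (x_0, …, x_l) ∈ K^{l+1}` with
`x_0^{p+1} + ⋯ + x_l^{p+1} = 0` equals `(p^2 − 1)(p^{l+1} + 1)Σ_l` if `l` is even and
`(p^2 − 1)(p^l + 1)Σ_l` if `l` is odd; equivalently, the Fermat hypersurface of degree
`p+1` in projective `l`-space has `(p^{l+1} + 1)Σ_l` points over `K` if `l` is even and
`(p^l + 1)Σ_l` points over `K` if `l` is odd. -/
theorem fermat_nonzero_count_closed_formula
    (p : ℕ) (hp : p.Prime) (hp2 : 2 < p)
    (K : Type*) [Field K] [Fintype K] (hK : Fintype.card K = p ^ 2)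
    (l : ℕ) (hl : 1 ≤ l) :
    (Even l →
      Nat.card {x : Fin (l + 1) → K // x ≠ 0 ∧ ∑ i, x i ^ (p + 1) = 0} =
        (p ^ 2 - 1) * ((p ^ (l + 1) + 1) * fermatSigma p l)) ∧
    (Odd l →
      Nat.card {x : Fin (l + 1) → K // x ≠ 0 ∧ ∑ i, x i ^ (p + 1) = 0} =
        (p ^ 2 - 1) * ((p ^ l + 1) * fermatSigma p l)) := by
  classical
  have hp0 : (p : ℤ) ≠ 0 := by exact_mod_cast hp.ne_zero
  have hz := card_zeros p hp K hK (l + 1)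
  rw [← card_nonzero_zeros_add_one p K (l + 1)] at hz
  have hs := fermatSigma_mul p l
  have hone : 1 ≤ p ^ 2 := Nat.one_le_pow _ _ hp.pos
  constructor
  · rintro ⟨m, rfl⟩
    rw [show (m + m - 1) / 2 + 1 = m by omega] at hs
    zify [hone]
    apply mul_left_cancel₀ hp0
    rw [Odd.neg_one_pow ⟨m, by ring⟩] at hz
    push_cast at hz
    linear_combination hz - p * (p ^ (m + m + 1) + 1) * hs
  · rintro ⟨m, rfl⟩
    rw [show (2 * m + 1 - 1) / 2 + 1 = m + 1 by omega] at hs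
    zify [hone]
    apply mul_left_cancel₀ hp0
    rw [Even.neg_one_pow ⟨m + 1, by ring⟩] at hz
    push_cast at hz
    linear_combination hz - p * (p ^ (2 * m + 1) + 1) * hs
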